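/- arXiv:1308.1758 — 3 statements merged into one kernel-verified Lean document; each statement's English description precedes it below -/
import Mathlib

section
/- Let L > 0 and μ > 0, set λ = (3π)^{2/5} μ^{-4/5} and l = π/√λ, and assume l < L/2. Define ψ₁ : ℝ → ℝ by ψ₁(x) = (1/(λμ))(1 + cos(√λ (x − L/2))) if |x − L/2| ≤ l and ψ₁(x) = 0 otherwise. Then ψ₁ is L²-normalized on [0, L]: ∫₀ᴸ ψ₁(x)² dx = 1. -/
/-!
On its support `[L/2 - l, L/2 + l]`, contained in `(0, L]`, the integrand is
`(1 + cos (s (x - L/2)))² / (λμ)²` with `s = √λ`. As `s l = π`, the support is one full period of the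
cosine, so the integral equals `3 l / (λμ)² = 3π / (s⁵ μ²)`; this is `1` because the choice of `λ`
means exactly `s⁵ μ² = 3π`.
-/

/-- The choice of `λ` gives `(√λ)⁵ μ² = 3π`. -/
lemma sqrt_lam_pow (μ lam : ℝ) (hμ : 0 < μ)
    (hlam : lam = (3 * Real.pi) ^ ((2 : ℝ) / 5) * μ ^ (-(4 : ℝ) / 5)) :
    Real.sqrt lam ^ 5 * μ ^ 2 = 3 * Real.pi := by
  have hp : (0 : ℝ) < 3 * Real.pi := by positivity
  have h1 : Real.sqrt lam = (3 * Real.pi) ^ ((1 : ℝ) / 5) * μ ^ (-(2 : ℝ) / 5) := by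
    rw [Real.sqrt_eq_rpow, hlam, Real.mul_rpow (by positivity) (by positivity),
      ← Real.rpow_mul hp.le, ← Real.rpow_mul hμ.le]
    norm_num
  rw [h1, mul_pow, ← Real.rpow_natCast, ← Real.rpow_natCast (μ ^ _), ← Real.rpow_mul hp.le,
    ← Real.rpow_mul hμ.le, ← Real.rpow_natCast μ 2, mul_assoc, ← Real.rpow_add hμ]
  norm_num

/-- One full period of the squared raised cosine. -/
lemma integral_one_add_cos_sq (s c l : ℝ) (hs : 0 < s) (hl : s * l = Real.pi) :
    ∫ x in (c - l)..(c + l), (1 + Real.cos (s * (x - c))) ^ 2 = 3 * l := by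
  have hd : ∀ x ∈ Set.uIcc (c - l) (c + l), HasDerivAt
      (fun x => 3 / 2 * x + 2 * Real.sin (s * (x - c)) / s
        + Real.sin (s * (x - c)) * Real.cos (s * (x - c)) / (2 * s))
      ((1 + Real.cos (s * (x - c))) ^ 2) x := by
    intro x _
    have h0 : HasDerivAt (fun x => s * (x - c)) (s * 1) x :=
      ((hasDerivAt_id x).sub_const c).const_mul s
    have h1 := ((((hasDerivAt_id x).const_mul (3 / 2 : ℝ)).add
      ((h0.sin.const_mul 2).div_const s)).add ((h0.sin.mul h0.cos).div_const (2 * s)))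
    refine h1.congr_deriv ?_
    field_simp
    linear_combination -Real.sin_sq_add_cos_sq (s * (x - c))
  rw [intervalIntegral.integral_eq_sub_of_hasDerivAt hd
    (Continuous.intervalIntegrable (by fun_prop) _ _)]
  have e1 : s * (c + l - c) = Real.pi := by rw [← hl]; ring
  have e2 : s * (c - l - c) = -Real.pi := by rw [← hl]; ring
  simp only [e1, e2, Real.sin_neg, Real.sin_pi]
  ring

theorem stmt_0 (L μ lam l : ℝ) (hL : 0 < L) (hμ : 0 < μ)
    (hlam : lam = (3 * Real.pi) ^ ((2 : ℝ) / 5) * μ ^ (-(4 : ℝ) / 5))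
    (hl : l = Real.pi / Real.sqrt lam) (hlL : l < L / 2)
    (ψ : ℝ → ℝ)
    (hψ : ∀ x : ℝ, ψ x =
      if |x - L / 2| ≤ l then (1 / (lam * μ)) * (1 + Real.cos (Real.sqrt lam * (x - L / 2)))
      else 0) :
    ∫ x in (0 : ℝ)..L, (ψ x) ^ 2 = 1 := by
  have hpow := sqrt_lam_pow μ lam hμ hlam
  have hlam0 : 0 < lam := by rw [hlam]; positivity
  have hs : 0 < Real.sqrt lam := Real.sqrt_pos.2 hlam0
  have hsq : Real.sqrt lam ^ 2 = lam := Real.sq_sqrt hlam0.le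
  have hsl : Real.sqrt lam * l = Real.pi := by rw [hl]; field_simp
  have hl0 : 0 < l := by rw [hl]; positivity
  have hfun : (fun x => ψ x ^ 2) = (Set.Icc (L / 2 - l) (L / 2 + l)).indicator
      (fun x => (1 / (lam * μ)) ^ 2 * (1 + Real.cos (Real.sqrt lam * (x - L / 2))) ^ 2) := by
    funext x
    have hiff : |x - L / 2| ≤ l ↔ x ∈ Set.Icc (L / 2 - l) (L / 2 + l) := by
      rw [abs_le, Set.mem_Icc]
      constructor <;> rintro ⟨h1, h2⟩ <;> constructor <;> linarith
    by_cases hx : x ∈ Set.Icc (L / 2 - l) (L / 2 + l)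
    · rw [Set.indicator_of_mem hx, hψ, if_pos (hiff.2 hx), mul_pow]
    · rw [Set.indicator_of_notMem hx, hψ, if_neg (fun h => hx (hiff.1 h))]
      norm_num
  have hsub : Set.Ioc 0 L ∩ Set.Icc (L / 2 - l) (L / 2 + l)
      = Set.Icc (L / 2 - l) (L / 2 + l) := by
    apply Set.inter_eq_right.2
    rintro x ⟨h1, h2⟩
    constructor <;> linarith
  rw [hfun, intervalIntegral.integral_of_le hL.le,
    MeasureTheory.setIntegral_indicator measurableSet_Icc, hsub,
    MeasureTheory.integral_Icc_eq_integral_Ioc,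
    ← intervalIntegral.integral_of_le (by linarith), intervalIntegral.integral_const_mul,
    integral_one_add_cos_sq _ _ _ hs hsl]
  -- After clearing denominators this is `3 l = λ² μ²`, which is `s⁵ μ² = 3 s l` divided by `s`.
  have key : 3 * l = (lam * μ) ^ 2 := by
    apply mul_left_cancel₀ hs.ne'
    rw [← hsq, Real.sqrt_sq hs.le]
    linear_combination 3 * hsl - hpow
  rw [key]
  field_simp
end

section
/- Let L > 0 and μ > 0, set λ = (3π)^{2/5} μ^{-4/5} and l = π/√λ, and assume l < L/2. Define ψ₁ : ℝ → ℝ by ψ₁(x) = (1/(λμ))(1 + cos(√λ (x − L/2))) if |x − L/2| ≤ l and ψ₁(x) = 0 otherwise. Then for every x with |x − L/2| < l, ψ₁ is twice differentiable at x, ψ₁(x) > 0, and the Euler–Lagrange equation −ψ₁''(x) + 1/μ = λ ψ₁(x) holds. -/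
/-!
The set `|x - L / 2| < l` is open, so near each of its points `ψ` agrees with the smooth function
`y ↦ (1 + cos (√lam * (y - L / 2))) / (lam * μ)`; both derivatives can be computed from that
formula, and the equation reduces to `√lam ^ 2 = lam`. Positivity holds because
`|√lam * (x - L / 2)| < √lam * l = π`, where `cos > -1`. Of the explicit value of `lam`, only
`0 < lam` matters.
-/

open Real MeasureTheory

theorem stmt_1 (L μ lam l : ℝ) (hL : 0 < L) (hμ : 0 < μ)
    (hlam : lam = (3 * Real.pi) ^ ((2 : ℝ) / 5) * μ ^ (-(4 : ℝ) / 5))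
    (hl : l = Real.pi / Real.sqrt lam) (hlL : l < L / 2)
    (ψ : ℝ → ℝ)
    (hψ : ∀ x : ℝ, ψ x =
      if |x - L / 2| ≤ l then (1 / (lam * μ)) * (1 + Real.cos (Real.sqrt lam * (x - L / 2)))
      else 0) :
    ∀ x : ℝ, |x - L / 2| < l →
      DifferentiableAt ℝ ψ x ∧ DifferentiableAt ℝ (deriv ψ) x ∧
      0 < ψ x ∧
      -(deriv (deriv ψ) x) + 1 / μ = lam * ψ x := by
  intro x hx
  have hlam_pos : 0 < lam := by rw [hlam]; positivity
  have hs : 0 < √lam := Real.sqrt_pos.mpr hlam_pos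
  have hsq : √lam * √lam = lam := Real.mul_self_sqrt hlam_pos.le
  have hd1 : ∀ y : ℝ, |y - L / 2| < l →
      HasDerivAt ψ (1 / (lam * μ) * (-Real.sin (√lam * (y - L / 2)) * √lam)) y := by
    intro y hy
    have hlin : HasDerivAt (fun z : ℝ => √lam * (z - L / 2)) √lam y := by
      simpa using ((hasDerivAt_id y).sub_const (L / 2)).const_mul √lam
    have hcos := (hlin.cos.const_add 1).const_mul (1 / (lam * μ))
    refine hcos.congr_of_eventuallyEq ?_
    have hnear : ∀ᶠ z in nhds y, |z - L / 2| < l :=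
      (by fun_prop : Continuous fun z : ℝ => |z - L / 2|).continuousAt.eventually_lt_const hy
    filter_upwards [hnear] with z hz
    rw [hψ z, if_pos hz.le]
  have hd2 : HasDerivAt (deriv ψ)
      (1 / (lam * μ) * (-(Real.cos (√lam * (x - L / 2)) * √lam) * √lam)) x := by
    have hlin : HasDerivAt (fun z : ℝ => √lam * (z - L / 2)) √lam x := by
      simpa using ((hasDerivAt_id x).sub_const (L / 2)).const_mul √lam
    have hsin := (hlin.sin.neg.mul_const √lam).const_mul (1 / (lam * μ))
    refine hsin.congr_of_eventuallyEq ?_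
    have hnear : ∀ᶠ z in nhds x, |z - L / 2| < l :=
      (by fun_prop : Continuous fun z : ℝ => |z - L / 2|).continuousAt.eventually_lt_const hx
    filter_upwards [hnear] with z hz
    exact (hd1 z hz).deriv
  refine ⟨(hd1 x hx).differentiableAt, hd2.differentiableAt, ?_, ?_⟩
  · rw [hψ x, if_pos hx.le]
    have harg : |√lam * (x - L / 2)| < Real.pi := by
      rw [abs_mul, abs_of_pos hs, mul_comm]
      rwa [hl, lt_div_iff₀ hs] at hx
    have hcos : -1 < Real.cos (√lam * (x - L / 2)) := by
      rw [← Real.cos_abs, ← Real.cos_pi]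
      exact Real.cos_lt_cos_of_nonneg_of_le_pi (abs_nonneg _) le_rfl harg
    have hsum : 0 < 1 + Real.cos (√lam * (x - L / 2)) := by linarith
    positivity
  · rw [hd2.deriv, hψ x, if_pos hx.le, neg_mul, mul_assoc, hsq]
    field_simp
    ring
end

section
/- Let L > 0 and μ > 0, set λ = (3π)^{2/5} μ^{-4/5} and l = π/√λ, and assume l < L/2. Define ψ₁ : ℝ → ℝ by ψ₁(x) = (1/(λμ))(1 + cos(√λ (x − L/2))) if |x − L/2| ≤ l and ψ₁(x) = 0 otherwise. Then the value of the regularized energy at ψ₁ is (1/μ)∫₀ᴸ |ψ₁(x)| dx + (1/2)∫₀ᴸ (ψ₁'(x))² dx = (5π/2) λ^{-3/2} μ^{-2} = (5π/2)(3π)^{-3/5} μ^{-4/5}; in particular the energy equals a constant times μ^{-4/5}. -/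
open Real MeasureTheory

/-!
With `s = √lam` and `c = 1 / (lam * μ)`, the function `ψ` is the bump `c (1 + cos (s (x - L/2)))` on
`[L/2 - l, L/2 + l] ⊆ [0, L]` and vanishes elsewhere, so both integrals over `[0, L]` reduce to
integrals of smooth functions over the support (`integral_eq_of_support`). Since `s * l = π`, the
boundary terms `sin (± π)` vanish, giving `∫ |ψ| = 2 c l` and `∫ (ψ')² = c² s² l`
(`integral_bump`, `integral_bump_deriv_sq`). The energy is therefore
`2π / (s³ μ²) + π / (2 s³ μ²) = (5π/2) s⁻³ μ⁻²`; inserting the value of `lam` gives the second form.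
-/

/-- Values at the endpoints `a`, `b` are irrelevant, so differentiability of the bump across the
boundary of its support never has to be examined. -/
lemma integral_eq_of_support {f g : ℝ → ℝ} {a b L : ℝ} (ha : 0 ≤ a) (hab : a ≤ b) (hb : b ≤ L)
    (hin : ∀ x ∈ Set.Ioo a b, f x = g x) (hout : ∀ x, x < a ∨ b < x → f x = 0) :
    ∫ x in (0 : ℝ)..L, f x = ∫ x in a..b, g x := by
  rw [intervalIntegral.integral_of_le (by linarith), intervalIntegral.integral_of_le hab,
    ← integral_Icc_eq_integral_Ioc, integral_Ioc_eq_integral_Ioo,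
    ← setIntegral_congr_fun measurableSet_Ioo hin, ← integral_Icc_eq_integral_Ioo]
  refine setIntegral_eq_of_subset_of_forall_sdiff_eq_zero measurableSet_Icc
    (Set.Icc_subset_Icc ha hb) ?_
  rintro x ⟨-, hx⟩
  apply hout
  by_contra! h
  exact hx h

lemma integral_bump (c s m l : ℝ) (hs : s ≠ 0) (hsl : s * l = π) :
    ∫ x in (m - l)..(m + l), c * (1 + cos (s * (x - m))) = 2 * c * l := by
  have hd : ∀ x ∈ Set.uIcc (m - l) (m + l),
      HasDerivAt (fun x => c * (x + sin (s * (x - m)) / s)) (c * (1 + cos (s * (x - m)))) x := by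
    intro x _
    have h1 : HasDerivAt (fun x => s * (x - m)) s x := by
      simpa using ((hasDerivAt_id x).sub_const m).const_mul s
    refine (((hasDerivAt_id x).add (h1.sin.div_const s)).const_mul c).congr_deriv ?_
    field_simp
  rw [intervalIntegral.integral_eq_sub_of_hasDerivAt hd
    (Continuous.intervalIntegrable (by fun_prop) _ _)]
  have e1 : s * (m + l - m) = π := by rw [← hsl]; ring
  have e2 : s * (m - l - m) = -π := by rw [← hsl]; ring
  simp only [e1, e2, sin_neg, sin_pi]
  ring

lemma integral_bump_deriv_sq (c s m l : ℝ) (hs : s ≠ 0) (hsl : s * l = π) :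
    ∫ x in (m - l)..(m + l), (c * (-sin (s * (x - m)) * s)) ^ 2 = c ^ 2 * s ^ 2 * l := by
  have hd : ∀ x ∈ Set.uIcc (m - l) (m + l),
      HasDerivAt (fun x => c ^ 2 * s ^ 2 *
        ((x - sin (s * (x - m)) * cos (s * (x - m)) / s) / 2))
        ((c * (-sin (s * (x - m)) * s)) ^ 2) x := by
    intro x _
    have h1 : HasDerivAt (fun x => s * (x - m)) s x := by
      simpa using ((hasDerivAt_id x).sub_const m).const_mul s
    refine ((((hasDerivAt_id x).sub ((h1.sin.mul h1.cos).div_const s)).div_const 2).const_mul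
      (c ^ 2 * s ^ 2)).congr_deriv ?_
    field_simp
    linear_combination (-c ^ 2) * sin_sq_add_cos_sq (s * (x - m))
  rw [intervalIntegral.integral_eq_sub_of_hasDerivAt hd
    (Continuous.intervalIntegrable (by fun_prop) _ _)]
  have e1 : s * (m + l - m) = π := by rw [← hsl]; ring
  have e2 : s * (m - l - m) = -π := by rw [← hsl]; ring
  simp only [e1, e2, sin_neg, sin_pi]
  ring

theorem stmt_4 (L μ lam l : ℝ) (hL : 0 < L) (hμ : 0 < μ)
    (hlam : lam = (3 * Real.pi) ^ ((2 : ℝ) / 5) * μ ^ (-(4 : ℝ) / 5))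
    (hl : l = Real.pi / Real.sqrt lam) (hlL : l < L / 2)
    (ψ : ℝ → ℝ)
    (hψ : ∀ x : ℝ, ψ x =
      if |x - L / 2| ≤ l then (1 / (lam * μ)) * (1 + Real.cos (Real.sqrt lam * (x - L / 2)))
      else 0) :
    (1 / μ) * (∫ x in (0 : ℝ)..L, |ψ x|) + (1 / 2) * (∫ x in (0 : ℝ)..L, (deriv ψ x) ^ 2)
      = (5 * Real.pi / 2) * lam ^ (-(3 : ℝ) / 2) * μ ^ (-(2 : ℝ)) ∧
    (1 / μ) * (∫ x in (0 : ℝ)..L, |ψ x|) + (1 / 2) * (∫ x in (0 : ℝ)..L, (deriv ψ x) ^ 2)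
      = (5 * Real.pi / 2) * (3 * Real.pi) ^ (-(3 : ℝ) / 5) * μ ^ (-(4 : ℝ) / 5) := by
  have hpi := Real.pi_pos
  have hlam0 : 0 < lam := by rw [hlam]; positivity
  have hsq : sqrt lam ^ 2 = lam := sq_sqrt hlam0.le
  have hs : 0 < sqrt lam := sqrt_pos.2 hlam0
  have hpow : lam ^ (-(3 : ℝ) / 2) = (sqrt lam ^ 3)⁻¹ := by
    rw [sqrt_eq_rpow, ← rpow_natCast, ← rpow_mul hlam0.le, ← rpow_neg hlam0.le]
    norm_num
  set s := sqrt lam with hsdef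
  have hsl : s * l = π := by rw [hl]; field_simp
  have hl0 : 0 < l := by rw [hl]; positivity
  set c := 1 / (lam * μ) with hc
  have hc0 : 0 < c := by positivity
  have hin : ∀ x ∈ Set.Ioo (L / 2 - l) (L / 2 + l),
      ψ x = c * (1 + cos (s * (x - L / 2))) := by
    intro x hx
    rw [hψ, if_pos (abs_le.2 ⟨by linarith [hx.1], by linarith [hx.2]⟩)]
  have hout : ∀ x, x < L / 2 - l ∨ L / 2 + l < x → ψ x = 0 := by
    intro x hx
    rw [hψ, if_neg]
    intro h
    have := abs_le.1 h
    rcases hx with hx | hx <;> linarith [this.1, this.2]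
  have I1 : ∫ x in (0 : ℝ)..L, |ψ x| = 2 * c * l := by
    rw [← integral_bump c s (L / 2) l hs.ne' hsl]
    refine integral_eq_of_support (by linarith) (by linarith) (by linarith) ?_ ?_
    · intro x hx
      rw [hin x hx, abs_of_nonneg]
      exact mul_nonneg hc0.le (by linarith [neg_one_le_cos (s * (x - L / 2))])
    · intro x hx
      rw [hout x hx, abs_zero]
  have I2 : ∫ x in (0 : ℝ)..L, (deriv ψ x) ^ 2 = c ^ 2 * s ^ 2 * l := by
    rw [← integral_bump_deriv_sq c s (L / 2) l hs.ne' hsl]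
    refine integral_eq_of_support (by linarith) (by linarith) (by linarith) ?_ ?_
    · intro x hx
      have h1 : HasDerivAt (fun x => s * (x - L / 2)) s x := by
        simpa using ((hasDerivAt_id x).sub_const (L / 2)).const_mul s
      have h2 := (h1.cos.const_add 1).const_mul c
      have h3 : ψ =ᶠ[nhds x] fun x => c * (1 + cos (s * (x - L / 2))) :=
        Filter.eventuallyEq_of_mem (isOpen_Ioo.mem_nhds hx) hin
      rw [h3.deriv_eq, h2.deriv]
    · intro x hx
      have hopen : IsOpen (Set.Iio (L / 2 - l) ∪ Set.Ioi (L / 2 + l)) :=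
        isOpen_Iio.union isOpen_Ioi
      have h3 : ψ =ᶠ[nhds x] fun _ => 0 :=
        Filter.eventuallyEq_of_mem (hopen.mem_nhds hx) hout
      rw [h3.deriv_eq]
      simp
  have key : (1 / μ) * (∫ x in (0 : ℝ)..L, |ψ x|) + (1 / 2) * (∫ x in (0 : ℝ)..L, (deriv ψ x) ^ 2)
      = (5 * Real.pi / 2) * lam ^ (-(3 : ℝ) / 2) * μ ^ (-(2 : ℝ)) := by
    rw [I1, I2, hpow, rpow_neg hμ.le, rpow_two, hc, hl, ← hsq]
    field_simp
    ring
  refine ⟨key, key.trans ?_⟩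
  rw [hlam, mul_rpow (by positivity) (by positivity), ← rpow_mul (by positivity),
    ← rpow_mul hμ.le, ← mul_assoc, mul_assoc _ (μ ^ _) (μ ^ _), ← rpow_add hμ]
  norm_num
end
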